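/- Let N = n+1 ≥ 3. Then the normalized volume of the adjacency polytope of the cycle graph C_N equals the adjacency polytope bound: n! · vol(conv(S)) = N · C(N−1, ⌊(N−1)/2⌋), where vol denotes the n-dimensional Lebesgue measure on ℝ^n and C(·,·) the binomial coefficient. -/

import Mathlib

open Finset MeasureTheory

/-- `eVec n k` is the standard basis vector `e_k` of `ℝ^n` for `1 ≤ k ≤ n`,
with the convention `e_0 = e_{n+1} = 0`. -/
noncomputable def eVec (n : ℕ) (k : ℕ) : Fin n → ℝ := fun t => if (t : ℕ) + 1 = k then 1 else 0

/-- `dVec n i = e_{i-1} - e_i`. -/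
noncomputable def dVec (n : ℕ) (i : ℕ) : Fin n → ℝ := eVec n (i - 1) - eVec n i

/-- The point configuration `S = {0} ∪ {±(e_{i-1} - e_i) : 1 ≤ i ≤ N}`, whose convex
hull is the adjacency polytope of the cycle graph `C_N`. -/
noncomputable def Sconf (n N : ℕ) : Set (Fin n → ℝ) :=
  insert 0 {x | ∃ i ∈ Finset.Icc 1 N, x = dVec n i ∨ x = -dVec n i}

/-- Prepend a zero coordinate. -/
noncomputable def yv {n : ℕ} (x : Fin n → ℝ) : Fin (n + 1) → ℝ := Fin.cons 0 x

@[simp] lemma yv_zero {n : ℕ} (x : Fin n → ℝ) : yv x 0 = 0 := rfl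
@[simp] lemma yv_succ {n : ℕ} (x : Fin n → ℝ) (i : Fin n) : yv x i.succ = x i := rfl

lemma yv_add {n : ℕ} (x z : Fin n → ℝ) (i) : yv (x + z) i = yv x i + yv z i := by
  refine Fin.cases ?_ (fun j => ?_) i <;> simp

lemma yv_smul {n : ℕ} (c : ℝ) (x : Fin n → ℝ) (i) : yv (c • x) i = c * yv x i := by
  refine Fin.cases ?_ (fun j => ?_) i <;> simp

/-- coordinate functional -/
noncomputable def yl {n : ℕ} (i : Fin (n + 1)) : (Fin n → ℝ) →ₗ[ℝ] ℝ where
  toFun x := yv x i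
  map_add' x z := yv_add x z i
  map_smul' c x := yv_smul c x i

lemma ae_ne {n : ℕ} (i j : Fin (n + 1)) (hij : i ≠ j) :
    ∀ᵐ x : Fin n → ℝ, yv x i ≠ yv x j := by
  have h : LinearMap.ker (yl i - yl j : (Fin n → ℝ) →ₗ[ℝ] ℝ) ≠ ⊤ := by
    intro h
    rw [LinearMap.ker_eq_top] at h
    have key : ∀ x : Fin n → ℝ, yv x i = yv x j := by
      intro x
      have := LinearMap.congr_fun h x
      simp only [LinearMap.sub_apply, LinearMap.zero_apply] at this
      exact sub_eq_zero.1 this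
    revert hij key
    refine Fin.cases ?_ (fun a => ?_) i <;> refine Fin.cases ?_ (fun b => ?_) j <;> intro hij key
    · exact hij rfl
    · have := key (Pi.single b 1); simp at this
    · have := key (Pi.single a 1); simp at this
    · have hab : a ≠ b := fun h => hij (by rw [h])
      have := key (Pi.single b 1); simp [Pi.single_apply, hab] at this
  have h0 := Measure.addHaar_submodule (volume : Measure (Fin n → ℝ)) _ h
  rw [ae_iff]
  convert h0 using 2
  ext x
  simp only [not_not, Set.mem_setOf_eq, SetLike.mem_coe, LinearMap.mem_ker, LinearMap.sub_apply]
  exact sub_eq_zero.symm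

lemma ae_inj {n : ℕ} : ∀ᵐ x : Fin n → ℝ, Function.Injective (yv x) := by
  have : ∀ᵐ x : Fin n → ℝ, ∀ i j, i ≠ j → yv x i ≠ yv x j := by
    rw [ae_all_iff]; intro i
    rw [ae_all_iff]; intro j
    by_cases h : i = j
    · simp [h]
    · filter_upwards [ae_ne i j h] with x hx _ using hx
  filter_upwards [this] with x hx i j hij
  by_contra h
  exact hx i j h hij

/-- Orthant pieces of the cross-polytope. -/
def Orth {n : ℕ} (A : Finset (Fin n)) : Set (Fin n → ℝ) :=
  {u | (∀ i, if i ∈ A then u i < 0 else 0 < u i) ∧ ∑ i, |u i| ≤ 1}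

lemma meas_Orth {n : ℕ} (A : Finset (Fin n)) : MeasurableSet (Orth A) := by
  have h1 : MeasurableSet {u : Fin n → ℝ | ∀ i, if i ∈ A then u i < 0 else 0 < u i} := by
    rw [Set.setOf_forall]
    refine MeasurableSet.iInter fun i => ?_
    by_cases h : i ∈ A
    · simpa [h] using measurableSet_lt (measurable_pi_apply i) measurable_const
    · simpa [h] using measurableSet_lt measurable_const (measurable_pi_apply i)
  have h2 : MeasurableSet {u : Fin n → ℝ | ∑ i, |u i| ≤ 1} :=
    measurableSet_le (by fun_prop) measurable_const
  exact h1.inter h2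

lemma Orth_disj {n : ℕ} {A B : Finset (Fin n)} (h : A ≠ B) : Disjoint (Orth A) (Orth B) := by
  rw [Set.disjoint_left]
  rintro u ⟨hA, -⟩ ⟨hB, -⟩
  apply h
  ext i
  have a := hA i
  have b := hB i
  by_cases h1 : i ∈ A <;> by_cases h2 : i ∈ B <;> simp [h1, h2] at a b ⊢ <;> linarith

lemma vol_Orth_eq {n : ℕ} (A : Finset (Fin n)) :
    volume (Orth A) = volume (Orth (∅ : Finset (Fin n))) := by
  have hp : MeasurePreserving
      (fun (u : Fin n → ℝ) i => (if i ∈ A then (fun t : ℝ => -t) else fun t => t) (u i)) volume volume := by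
    refine volume_preserving_pi (fun i => ?_)
    by_cases h : i ∈ A
    · simpa [h] using Measure.measurePreserving_neg (volume : Measure ℝ)
    · simp only [h, if_false]; exact MeasurePreserving.id (volume : Measure ℝ)
  rw [← hp.measure_preimage (meas_Orth ∅).nullMeasurableSet]
  congr 1
  ext u
  simp only [Orth, Set.mem_setOf_eq, Set.mem_preimage]
  refine and_congr (forall_congr' fun i => ?_) ?_
  · by_cases h : i ∈ A <;> simp [h]
  · have : ∀ i, |(if i ∈ A then (fun t : ℝ => -t) else fun t => t) (u i)| = |u i| := by
      intro i; by_cases h : i ∈ A <;> simp [h]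
    simp only [this]

lemma vol_cross {n : ℕ} (hn : 0 < n) : volume {u : Fin n → ℝ | ∑ i, |u i| ≤ 1} =
    ENNReal.ofReal (2 ^ n / (n.factorial : ℝ)) := by
  haveI : Nonempty (Fin n) := ⟨⟨0, hn⟩⟩
  have := MeasureTheory.volume_sum_rpow_le (ι := Fin n) (p := 1) le_rfl 1
  simpa [Real.Gamma_nat_eq_factorial, Real.Gamma_two, one_add_one_eq_two] using this

lemma vol_Orth {n : ℕ} (hn : 0 < n) (A : Finset (Fin n)) :
    volume (Orth A) = ENNReal.ofReal (1 / (n.factorial : ℝ)) := by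
  have h1 : volume {u : Fin n → ℝ | ∑ i, |u i| ≤ 1} =
      volume (⋃ A ∈ (univ : Finset (Finset (Fin n))), Orth A) := by
    apply measure_congr
    filter_upwards [ae_inj] with u hu
    apply propext
    change (u ∈ {u : Fin n → ℝ | ∑ i, |u i| ≤ 1}) ↔ _
    change _ ↔ u ∈ (⋃ A ∈ (univ : Finset (Finset (Fin n))), Orth A)
    simp only [Set.mem_iUnion, mem_univ, exists_prop, true_and, Set.mem_setOf_eq]
    constructor
    · intro h
      refine ⟨univ.filter (fun i => u i < 0), fun i => ?_, h⟩
      have : u i ≠ 0 := fun h0 => by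
        have := @hu i.succ 0 (by simpa using h0)
        exact Fin.succ_ne_zero _ this
      by_cases h : u i < 0
      · simp [h]
      · simp [h]; exact lt_of_le_of_ne (not_lt.1 h) this.symm
    · rintro ⟨A, hA⟩
      exact hA.2
  rw [measure_biUnion_finset (fun A _ B _ h => Orth_disj h) (fun A _ => meas_Orth A),
    vol_cross hn, Finset.sum_congr rfl (fun A _ => vol_Orth_eq A)] at h1
  simp only [sum_const, card_univ, Fintype.card_finset, Fintype.card_fin, nsmul_eq_mul] at h1
  rw [vol_Orth_eq]
  rw [div_eq_mul_one_div, ENNReal.ofReal_mul (by positivity)] at h1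
  have e : ENNReal.ofReal (2 ^ n) = ((2 ^ n : ℕ) : ENNReal) := by
    rw [← ENNReal.ofReal_natCast]; push_cast; rfl
  rw [e] at h1
  exact ((ENNReal.mul_right_inj (by simp) (by exact ENNReal.natCast_ne_top _)).1 h1).symm

/-- The region with exactly `h` negative coordinates. -/
def Reg (n h : ℕ) : Set (Fin n → ℝ) := ⋃ A ∈ powersetCard h (univ : Finset (Fin n)), Orth A

lemma meas_Reg (n h : ℕ) : MeasurableSet (Reg n h) :=
  Finset.measurableSet_biUnion _ fun A _ => meas_Orth A

lemma vol_Reg {n : ℕ} (hn : 0 < n) (h : ℕ) :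
    volume (Reg n h) = (n.choose h : ENNReal) * ENNReal.ofReal (1 / (n.factorial : ℝ)) := by
  rw [Reg, measure_biUnion_finset (fun A _ B _ h => Orth_disj h) (fun A _ => meas_Orth A),
    Finset.sum_congr rfl (fun A _ => vol_Orth hn A)]
  simp

lemma mem_Reg {n h : ℕ} (u : Fin n → ℝ) : u ∈ Reg n h ↔
    (∀ i, u i ≠ 0) ∧ (univ.filter (fun i => u i < 0)).card = h ∧ ∑ i, |u i| ≤ 1 := by
  simp only [Reg, Set.mem_iUnion, mem_powersetCard, subset_univ, true_and, exists_prop]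
  constructor
  · rintro ⟨A, hA, h1, h2⟩
    refine ⟨fun i => ?_, ?_, h2⟩
    · have := h1 i
      by_cases h : i ∈ A <;> simp [h] at this <;> [exact this.ne; exact this.ne']
    · rw [← hA]; congr 1; ext i
      have := h1 i
      by_cases h : i ∈ A <;> simp [h] at this ⊢ <;> linarith
  · rintro ⟨h1, h2, h3⟩
    refine ⟨_, h2, fun i => ?_, h3⟩
    by_cases h : u i < 0
    · simp [h]
    · simp [h]; exact lt_of_le_of_ne (not_lt.1 h) (h1 i).symm

/-- Recentering involution. -/
noncomputable def Lk {n : ℕ} (k : Fin (n + 1)) : (Fin n → ℝ) →ₗ[ℝ] (Fin n → ℝ) :=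
  LinearMap.pi fun i => yl (Equiv.swap 0 k i.succ) - yl k

lemma yv_Lk {n : ℕ} (k : Fin (n + 1)) (x : Fin n → ℝ) (i : Fin (n + 1)) :
    yv (Lk k x) i = yv x (Equiv.swap 0 k i) - yv x k := by
  refine Fin.cases ?_ (fun j => ?_) i
  · simp
  · simp [Lk, yl]

lemma Lk_invol {n : ℕ} (k : Fin (n + 1)) : Lk k ∘ₗ Lk k = LinearMap.id := by
  ext1 i
  apply LinearMap.ext; intro c
  ext j
  rw [← yv_succ (((Lk k ∘ₗ Lk k) ∘ₗ _) c), LinearMap.comp_apply, LinearMap.comp_apply,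
    yv_Lk, yv_Lk, yv_Lk]
  simp

lemma abs_det_of_invol {n : ℕ} (f : (Fin n → ℝ) →ₗ[ℝ] (Fin n → ℝ)) (h : f ∘ₗ f = LinearMap.id) :
    |LinearMap.det f| = 1 := by
  have : LinearMap.det f * LinearMap.det f = 1 := by
    rw [← LinearMap.det_comp, h, LinearMap.det_id]
  rcases mul_self_eq_one_iff.1 this with h | h <;> simp [h]

lemma vol_pre {n : ℕ} (k : Fin (n + 1)) (s : Set (Fin n → ℝ)) :
    volume (Lk k ⁻¹' s) = volume s := by
  have h := abs_det_of_invol _ (Lk_invol k)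
  have h0 : LinearMap.det (Lk k) ≠ 0 := fun h0 => by simp [h0] at h
  rw [Measure.addHaar_preimage_linearMap _ h0, abs_inv, h]
  simp

lemma mem_pre {n h : ℕ} (k : Fin (n + 1)) (x : Fin n → ℝ) : Lk k x ∈ Reg n h ↔
    (∀ i, i ≠ k → yv x i ≠ yv x k) ∧ (univ.filter (fun i => yv x i < yv x k)).card = h ∧
      ∑ i, |yv x i - yv x k| ≤ 1 := by
  rw [mem_Reg]
  have e : ∀ i : Fin n, Lk k x i = yv x (Equiv.swap 0 k i.succ) - yv x k := fun i => by
    rw [← yv_succ (Lk k x), yv_Lk]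
  refine and_congr ?_ (and_congr ?_ ?_)
  · constructor
    · intro H i hi
      have h1 : Equiv.swap 0 k i ≠ 0 := by
        intro h; apply hi
        have := congrArg (Equiv.swap 0 k) h
        simpa using this
      obtain ⟨j, hj⟩ := Fin.exists_succ_eq.2 h1
      have := H j
      rw [e, hj] at this
      simpa [sub_eq_zero] using this
    · intro H i
      rw [e, sub_ne_zero]
      apply H
      intro h
      have := congrArg (Equiv.swap 0 k) h
      simp at this
  · have : (univ.filter (fun i : Fin n => Lk k x i < 0)).card =
        (univ.filter (fun i => yv x i < yv x k)).card := by
      have h2 : (univ.filter (fun i => yv x i < yv x k)) =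
          (univ.filter (fun i => yv (Lk k x) i < 0)).map (Equiv.swap 0 k).toEmbedding := by
        ext i
        simp only [mem_filter, mem_univ, true_and, mem_map_equiv, Equiv.symm_swap]
        rw [yv_Lk]; simp
      rw [h2, card_map, Fin.univ_succ, filter_cons]
      simp [filter_map, Function.comp_def]
      congr!
    rw [this]
  · have : ∑ i, |Lk k x i| = ∑ i, |yv x i - yv x k| := by
      rw [← Equiv.sum_comp (Equiv.swap 0 k), Fin.sum_univ_succ]
      simp [e]
    rw [this]

/-- The sublevel set of the distance to the median. -/
def Qs (n : ℕ) : Set (Fin n → ℝ) := {x | ∃ t, ∑ i, |yv x i - t| ≤ 1}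

lemma median {n : ℕ} (y : Fin (n + 1) → ℝ) (hy : Function.Injective y) (k : Fin (n + 1))
    (hk : (univ.filter (fun i => y i < y k)).card = n / 2) (t : ℝ) :
    ∑ i, |y i - y k| ≤ ∑ i, |y i - t| := by
  have hg : (univ.filter (fun i => y k < y i)).card = n - n / 2 := by
    have h1 := Finset.card_filter_add_card_filter_not (s := (univ : Finset (Fin (n+1))))
      (fun i => y i < y k)
    have h2 : (univ.filter (fun i => ¬ y i < y k)) = insert k (univ.filter (fun i => y k < y i)) := by
      ext i
      simp only [mem_filter, mem_univ, true_and, mem_insert, not_lt]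
      rw [le_iff_eq_or_lt]
      exact or_congr ⟨fun h => hy h.symm, fun h => by rw [h]⟩ Iff.rfl
    rw [h2, card_insert_of_notMem (by simp), hk] at h1
    simp at h1
    omega
  set s : Fin (n + 1) → ℝ := fun i =>
    (if y k < y i then 1 else 0) - (if y i < y k then 1 else 0) with hs
  have hsum : ∑ i, s i = ((n - n / 2 : ℕ) : ℝ) - ((n / 2 : ℕ) : ℝ) := by
    simp only [hs, Finset.sum_sub_distrib, Finset.sum_boole, hg, hk]
  have hb : ∑ i, s i = 0 ∨ ∑ i, s i = 1 := by
    rw [hsum]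
    rcases Nat.even_or_odd' n with ⟨c, h | h⟩
    · left; rw [show n - n / 2 = n / 2 by omega]; simp
    · right; rw [show n - n / 2 = n / 2 + 1 by omega]; push_cast; ring
  have hterm : ∀ i, |y i - y k| + s i * (y k - t) + (if i = k then |y k - t| else 0) ≤ |y i - t| := by
    intro i
    rcases lt_trichotomy (y i) (y k) with h | h | h
    · have hik : i ≠ k := fun e => by simp [e] at h
      simp only [hs, h, h.not_gt, hik, if_true, if_false]
      rw [abs_of_neg (sub_neg.2 h)]
      have := neg_abs_le (y i - t)
      linarith
    · have hik : i = k := hy h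
      simp [hs, hik]
    · have hik : i ≠ k := fun e => by simp [e] at h
      simp only [hs, h, h.not_gt, hik, if_true, if_false]
      rw [abs_of_pos (sub_pos.2 h)]
      have := le_abs_self (y i - t)
      linarith
  have := Finset.sum_le_sum (fun i (_ : i ∈ univ) => hterm i)
  rw [Finset.sum_add_distrib, Finset.sum_add_distrib, ← Finset.sum_mul] at this
  simp only [sum_ite_eq', mem_univ, if_true] at this
  have h3 := neg_abs_le (y k - t)
  have h4 := abs_nonneg (y k - t)
  rcases hb with hb | hb <;> rw [hb] at this <;> linarith

lemma exists_median {n : ℕ} (y : Fin (n + 1) → ℝ) (hy : Function.Injective y) :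
    ∃ k, (univ.filter (fun i => y i < y k)).card = n / 2 := by
  have hlt : ∀ k, (univ.filter (fun i => y i < y k)).card < n + 1 := by
    intro k
    have : (univ.filter (fun i => y i < y k)) ⊂ univ :=
      (Finset.ssubset_univ_iff).2 (fun h => by
        have := h ▸ mem_univ k
        simp at this)
    simpa using card_lt_card this
  have hinj : Function.Injective
      (fun k => (⟨_, hlt k⟩ : Fin (n + 1))) := by
    intro k l hkl
    simp only [Fin.mk.injEq] at hkl
    by_contra hne
    have key : ∀ a b, y a < y b → (univ.filter (fun i => y i < y a)).card <
        (univ.filter (fun i => y i < y b)).card := by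
      intro a b hab
      apply card_lt_card
      rw [Finset.ssubset_iff_of_subset]
      · exact ⟨a, by simpa using hab, by simp⟩
      · intro i; simp only [mem_filter, mem_univ, true_and]; intro h; exact h.trans hab
    rcases lt_or_gt_of_ne (fun h => hne (hy h)) with h | h
    · exact (key _ _ h).ne hkl
    · exact (key _ _ h).ne hkl.symm
  obtain ⟨k, hk⟩ := (Finite.injective_iff_surjective.1 hinj) ⟨n / 2, by omega⟩
  exact ⟨k, congrArg Fin.val hk⟩

lemma pre_disj {n h : ℕ} {k l : Fin (n + 1)} (hkl : k ≠ l) :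
    Disjoint (Lk k ⁻¹' Reg n h) (Lk l ⁻¹' Reg n h) := by
  rw [Set.disjoint_left]
  intro x hk hl
  rw [Set.mem_preimage, mem_pre] at hk hl
  obtain ⟨h1, h2, -⟩ := hk
  obtain ⟨-, h3, -⟩ := hl
  have key : ∀ a b, yv x a < yv x b → (univ.filter (fun i => yv x i < yv x a)).card <
        (univ.filter (fun i => yv x i < yv x b)).card := by
    intro a b hab
    apply card_lt_card
    rw [Finset.ssubset_iff_of_subset]
    · exact ⟨a, by simpa using hab, by simp⟩
    · intro i; simp only [mem_filter, mem_univ, true_and]; intro h; exact h.trans hab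
  rcases lt_or_gt_of_ne (h1 l hkl.symm) with h | h
  · have := key _ _ h; omega
  · have := key _ _ h; omega

lemma vol_Qs {n : ℕ} (hn : 0 < n) : volume (Qs n) =
    ((n + 1 : ℕ) : ENNReal) * ((n.choose (n / 2) : ENNReal) * ENNReal.ofReal (1 / (n.factorial : ℝ))) := by
  have h1 : volume (Qs n) =
      volume (⋃ k ∈ (univ : Finset (Fin (n + 1))), Lk k ⁻¹' Reg n (n / 2)) := by
    apply measure_congr
    filter_upwards [ae_inj] with x hx
    apply propext
    change (x ∈ Qs n) ↔ x ∈ (⋃ k ∈ (univ : Finset (Fin (n + 1))), Lk k ⁻¹' Reg n (n / 2))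
    simp only [Set.mem_iUnion, mem_univ, exists_prop, true_and, Set.mem_preimage, mem_pre]
    constructor
    · rintro ⟨t, ht⟩
      obtain ⟨k, hk⟩ := exists_median _ hx
      exact ⟨k, fun i hi h => hi (hx h), hk, (median _ hx k hk t).trans ht⟩
    · rintro ⟨k, -, -, h⟩
      exact ⟨_, h⟩
  rw [h1, measure_biUnion_finset (fun A _ B _ h => pre_disj h)
    (fun k _ => (meas_Reg n _).preimage (LinearMap.continuous_of_finiteDimensional _).measurable),
    Finset.sum_congr rfl (fun k _ => (vol_pre k _).trans (vol_Reg hn _))]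
  simp

/-- change of basis -/
noncomputable def Bm (n : ℕ) : Matrix (Fin n) (Fin n) ℝ := fun t j => dVec n (j + 1) t

lemma det_Bm (n : ℕ) : |(Bm n).det| = 1 := by
  have h : (Bm n).BlockTriangular id := by
    intro i j hij
    simp only [id] at hij
    have : (j : ℕ) < i := hij
    simp only [Bm, dVec, eVec, Pi.sub_apply]
    rw [if_neg (by omega), if_neg (by omega)]; simp
  rw [Matrix.det_of_upperTriangular h, abs_prod]
  apply prod_eq_one
  intro i _
  simp [Bm, dVec, eVec]

lemma sum_d (n : ℕ) : ∑ i : Fin (n + 1), dVec n (i + 1) = 0 := by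
  rw [Fin.sum_univ_eq_sum_range (fun i => dVec n (i + 1))]
  simp only [dVec, Nat.add_sub_cancel]
  rw [Finset.sum_range_sub']
  ext t
  have := t.2
  simp [eVec]
  omega

/-- index of the direction vector attached to coordinate `i` of `yv`. -/
noncomputable def dd (n : ℕ) : Fin (n + 1) → Fin n → ℝ :=
  Fin.cons (dVec n (n + 1)) (fun i : Fin n => dVec n (i + 1))

lemma sum_dd (n : ℕ) : ∑ i, dd n i = 0 := by
  rw [Fin.sum_univ_succ, ← sum_d n, Fin.sum_univ_castSucc]
  simp [dd, add_comm]

lemma toLin_eq (n : ℕ) (x : Fin n → ℝ) (t : ℝ) :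
    Matrix.toLin' (Bm n) x = ∑ i, (yv x i - t) • dd n i := by
  simp only [sub_smul, Finset.sum_sub_distrib, ← Finset.smul_sum, sum_dd, smul_zero, sub_zero]
  rw [Fin.sum_univ_succ]
  ext j
  simp [dd, Matrix.mulVec, dotProduct, Bm, mul_comm]

lemma mem_S (n : ℕ) (x : Fin n → ℝ) : x ∈ Sconf n (n + 1) ↔
    x = 0 ∨ ∃ i, x = dd n i ∨ x = - dd n i := by
  simp only [Sconf, Set.mem_insert_iff, Set.mem_setOf_eq]
  refine or_congr Iff.rfl ⟨?_, ?_⟩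
  · rintro ⟨i, hi, h⟩
    rw [Finset.mem_Icc] at hi
    by_cases h1 : i = n + 1
    · exact ⟨0, by subst h1; exact h⟩
    · refine ⟨Fin.succ ⟨i - 1, by omega⟩, ?_⟩
      simp only [dd, Fin.cons_succ]
      rwa [Nat.sub_add_cancel hi.1]
  · rintro ⟨i, h⟩
    revert h
    refine Fin.cases ?_ (fun j => ?_) i <;> intro h
    · exact ⟨n + 1, by simp, h⟩
    · exact ⟨j + 1, by simp, h⟩

lemma convex_Qs (n : ℕ) : Convex ℝ (Qs n) := by
  rintro x ⟨s, hs⟩ z ⟨t, ht⟩ a b ha hb hab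
  refine ⟨a * s + b * t, ?_⟩
  have : ∀ i, |yv (a • x + b • z) i - (a * s + b * t)| ≤ a * |yv x i - s| + b * |yv z i - t| := by
    intro i
    rw [yv_add, yv_smul, yv_smul]
    calc _ = |a * (yv x i - s) + b * (yv z i - t)| := by congr 1; ring
      _ ≤ _ := (abs_add_le _ _).trans (by rw [abs_mul, abs_mul, abs_of_nonneg ha, abs_of_nonneg hb])
  calc _ ≤ _ := Finset.sum_le_sum (fun i _ => this i)
    _ = a * ∑ i, |yv x i - s| + b * ∑ i, |yv z i - t| := by
      rw [Finset.sum_add_distrib, Finset.mul_sum, Finset.mul_sum]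
    _ ≤ a * 1 + b * 1 := by gcongr
    _ = 1 := by linarith

lemma hull_eq (n : ℕ) : convexHull ℝ (Sconf n (n + 1)) = Matrix.toLin' (Bm n) '' Qs n := by
  apply Set.Subset.antisymm
  · apply convexHull_min
    · have key : ∀ (i : Fin (n + 1)) (c : ℝ), |c| ≤ 1 → c • dd n i ∈ Matrix.toLin' (Bm n) '' Qs n := by
        intro i c hc
        set w : Fin (n + 1) → ℝ := Pi.single i c with hw
        set x : Fin n → ℝ := fun j => w j.succ - w 0 with hx
        have hyx : ∀ j, yv x j - (- w 0) = w j := by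
          intro j
          refine Fin.cases ?_ (fun j => ?_) j <;> simp [hx]
        refine ⟨x, ⟨- w 0, ?_⟩, ?_⟩
        · simp only [hyx]
          rw [Finset.sum_eq_single i]
          · simpa [hw] using hc
          · intro b _ hb; simp [hw, hb]
          · simp
        · rw [toLin_eq n x (- w 0)]
          simp only [hyx]
          rw [Finset.sum_eq_single i]
          · simp [hw]
          · intro b _ hb; simp [hw, hb]
          · simp
      intro x hx
      rw [mem_S] at hx
      rcases hx with rfl | ⟨i, rfl | rfl⟩
      · simpa using key 0 0 (by simp)
      · simpa using key i 1 (by simp)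
      · simpa using key i (-1) (by simp)
    · exact (convex_Qs n).linear_image _
  · rintro _ ⟨x, ⟨t, ht⟩, rfl⟩
    rw [toLin_eq n x t]
    have hconv := convex_convexHull ℝ (Sconf n (n + 1))
    have h0 : (0 : Fin n → ℝ) ∈ convexHull ℝ (Sconf n (n + 1)) :=
      subset_convexHull _ _ ((mem_S _ _).2 (Or.inl rfl))
    set c : Fin (n + 1) → ℝ := fun i => yv x i - t with hc
    have hm : ∀ i, (SignType.sign (c i) : ℝ) • dd n i ∈ convexHull ℝ (Sconf n (n + 1)) := by
      intro i
      apply subset_convexHull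
      rw [mem_S]
      rcases lt_trichotomy (c i) 0 with h | h | h
      · right; exact ⟨i, Or.inr (by simp [h])⟩
      · left; simp [h]
      · right; exact ⟨i, Or.inl (by simp [h])⟩
    have := hconv.sum_mem (t := (univ : Finset (Option (Fin (n + 1)))))
      (w := fun o => o.elim (1 - ∑ i, |c i|) (fun i => |c i|))
      (z := fun o => o.elim 0 (fun i => (SignType.sign (c i) : ℝ) • dd n i))
      (by rintro (_ | i) _ <;> simp <;> exact ht) (by simp [Fintype.sum_option])
      (by rintro (_ | i) _ <;> [exact h0; exact hm i])
    simpa [Fintype.sum_option, smul_smul, abs_mul_sign] using this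

theorem stmt16 (n N : ℕ) (hN : N = n + 1) (hN3 : 3 ≤ N) :
    (Nat.factorial n : ENNReal) * volume (convexHull ℝ (Sconf n N)) =
      ((N * Nat.choose (N - 1) ((N - 1) / 2) : ℕ) : ENNReal) := by
  subst hN
  rw [hull_eq, Measure.addHaar_image_linearMap, LinearMap.det_toLin', det_Bm, vol_Qs (by omega)]
  have hf : (n.factorial : ENNReal) * ENNReal.ofReal (1 / (n.factorial : ℝ)) = 1 := by
    rw [← ENNReal.ofReal_natCast, ← ENNReal.ofReal_mul (by positivity),
      mul_one_div_cancel (by positivity)]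
    simp
  simp only [ENNReal.ofReal_one, one_mul, Nat.add_sub_cancel]
  rw [Nat.cast_mul]
  calc _ = ((n + 1 : ℕ) : ENNReal) * (n.choose (n / 2) : ENNReal) *
        ((n.factorial : ENNReal) * ENNReal.ofReal (1 / (n.factorial : ℝ))) := by ring
    _ = _ := by rw [hf, mul_one]
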